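/- For the hard-limiter model with output probabilities p₊(θ) = ½(1 + erf((θ − α)/√2)) and p₋(θ) = ½(1 − erf((θ − α)/√2)), the exact Fisher information F(θ) = (dp₊/dθ)²/p₊(θ) + (dp₋/dθ)²/p₋(θ) coincides exactly with the moment-based lower bound F̃(θ) = (dμ(θ)/dθ)² / σ²(θ), where μ(θ) = erf((θ − α)/√2) and σ²(θ) = 1 − erf²((θ − α)/√2); both equal (2/π) · e^{−(θ−α)²} / (1 − erf²((θ − α)/√2)). -/

import Mathlib

open MeasureTheory Real

/-- The Gauss error function `erf t = (2/√π) ∫₀ᵗ e^{−u²} du`. -/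
noncomputable def erf (t : ℝ) : ℝ := (2 / Real.sqrt π) * ∫ u in (0 : ℝ)..t, Real.exp (-u ^ 2)

lemma erf_hasDerivAt (t : ℝ) : HasDerivAt erf (2 / Real.sqrt π * Real.exp (-t ^ 2)) t := by
  have hc : Continuous (fun u : ℝ => Real.exp (-u ^ 2)) := by fun_prop
  exact (hc.integral_hasStrictDerivAt 0 t).hasDerivAt.const_mul (2 / Real.sqrt π)

lemma erf_strictMono : StrictMono erf := by
  apply strictMono_of_deriv_pos
  intro t
  rw [(erf_hasDerivAt t).deriv]
  have := Real.sqrt_pos.2 Real.pi_pos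
  positivity

lemma erf_tendsto : Filter.Tendsto erf Filter.atTop (nhds 1) := by
  have hi : Integrable (fun u : ℝ => Real.exp (-u ^ 2)) := by
    simpa using integrable_exp_neg_mul_sq (b := 1) one_pos
  have hv : ∫ u in Set.Ioi (0 : ℝ), Real.exp (-u ^ 2) = Real.sqrt π / 2 := by
    simpa using integral_gaussian_Ioi 1
  have h := (intervalIntegral_tendsto_integral_Ioi 0 hi.integrableOn
    Filter.tendsto_id).const_mul (2 / Real.sqrt π)
  rw [hv] at h
  have hp := (Real.sqrt_pos.2 Real.pi_pos).ne'
  have e : 2 / Real.sqrt π * (Real.sqrt π / 2) = 1 := by field_simp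
  rw [e] at h
  exact h

lemma erf_lt_one (t : ℝ) : erf t < 1 :=
  (erf_strictMono (lt_add_one t)).trans_le (erf_strictMono.monotone.ge_of_tendsto erf_tendsto _)

lemma erf_neg' (t : ℝ) : erf (-t) = - erf t := by
  unfold erf
  have h := intervalIntegral.integral_comp_neg (a := 0) (b := t)
    (fun u : ℝ => Real.exp (-u ^ 2))
  simp only [neg_sq, neg_zero] at h
  rw [h, intervalIntegral.integral_symm (-t) 0]
  ring

lemma neg_one_lt_erf (t : ℝ) : -1 < erf t := by
  have := erf_lt_one (-t)
  rw [erf_neg'] at this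
  linarith

/-- **Tightness of the moment-based bound for the hard-limiter.**
The exact Fisher information `F(θ) = (p₊')²/p₊ + (p₋')²/p₋` of the hard-limiter output
coincides with the moment-based lower bound `F̃(θ) = (μ')²/σ²`, where
`μ(θ) = erf((θ−α)/√2)` and `σ²(θ) = 1 − erf²((θ−α)/√2)`; both equal
`(2/π) e^{−(θ−α)²} / (1 − erf²((θ−α)/√2))`. -/
theorem hard_limiter_bound_is_tight (α θ : ℝ)
    (pp pm μ σ2 F Ftilde : ℝ → ℝ)
    (hpp : ∀ t, pp t = (1 / 2) * (1 + erf ((t - α) / Real.sqrt 2)))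
    (hpm : ∀ t, pm t = (1 / 2) * (1 - erf ((t - α) / Real.sqrt 2)))
    (hμ : ∀ t, μ t = erf ((t - α) / Real.sqrt 2))
    (hσ2 : ∀ t, σ2 t = 1 - (erf ((t - α) / Real.sqrt 2)) ^ 2)
    (hF : ∀ t, F t = (deriv pp t) ^ 2 / pp t + (deriv pm t) ^ 2 / pm t)
    (hFt : ∀ t, Ftilde t = (deriv μ t) ^ 2 / σ2 t) :
    F θ = Ftilde θ ∧
      F θ = (2 / π) * Real.exp (-(θ - α) ^ 2) / (1 - (erf ((θ - α) / Real.sqrt 2)) ^ 2) := by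
  have hμd : HasDerivAt μ (2 / Real.sqrt π * Real.exp (-((θ - α) / Real.sqrt 2) ^ 2)
      * (1 / Real.sqrt 2)) θ := by
    rw [funext hμ]
    exact (erf_hasDerivAt _).comp θ (((hasDerivAt_id θ).sub_const α).div_const (Real.sqrt 2))
  have hsq : (2 / Real.sqrt π * Real.exp (-((θ - α) / Real.sqrt 2) ^ 2)
      * (1 / Real.sqrt 2)) ^ 2 = (2 / π) * Real.exp (-(θ - α) ^ 2) := by
    rw [mul_pow, mul_pow, ← Real.exp_nat_mul, div_pow, div_pow, div_pow, Real.sq_sqrt Real.pi_pos.le,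
      Real.sq_sqrt (by norm_num : (0 : ℝ) ≤ 2)]
    have e : ((2 : ℕ) : ℝ) * -((θ - α) ^ 2 / 2) = -(θ - α) ^ 2 := by push_cast; ring
    rw [e]
    ring
  generalize 2 / Real.sqrt π * Real.exp (-((θ - α) / Real.sqrt 2) ^ 2)
      * (1 / Real.sqrt 2) = d at hμd hsq
  have hppd : HasDerivAt pp ((1 / 2) * d) θ := by
    have : pp = fun t => (1 / 2) * (1 + μ t) := by funext t; rw [hpp, hμ]
    rw [this]
    exact (hμd.const_add 1).const_mul (1 / 2)
  have hpmd : HasDerivAt pm ((1 / 2) * (-d)) θ := by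
    have : pm = fun t => (1 / 2) * (1 - μ t) := by funext t; rw [hpm, hμ]
    rw [this]
    exact (hμd.const_sub 1).const_mul (1 / 2)
  rw [hF, hFt, hppd.deriv, hpmd.deriv, hμd.deriv, hpp, hpm, hσ2, ← hsq]
  have h1 := erf_lt_one ((θ - α) / Real.sqrt 2)
  have h2 := neg_one_lt_erf ((θ - α) / Real.sqrt 2)
  generalize erf ((θ - α) / Real.sqrt 2) = e at h1 h2
  have h3 : 1 + e ≠ 0 := by linarith
  have h4 : 1 - e ≠ 0 := by linarith
  have h5 : 1 - e ^ 2 = (1 + e) * (1 - e) := by ring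
  rw [h5, and_self]
  field_simp
  ring
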